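/- Let c : ℤ^d → ℤ be a configuration and let f_1, …, f_k be periodizers of c with 0 ∈ supp(f_i) for each i, where 1 ≤ k ≤ d. If f_1, …, f_k are independent, i.e., for every choice of nonzero vectors v_i ∈ supp(f_i) (i = 1,…,k) the vectors v_1, …, v_k are linearly independent over ℚ, then c = c_1 + … + c_m for finitely many k-periodic functions c_1, …, c_m : ℤ^d → ℤ. -/

import Mathlib

namespace PaperFormal

/-- View an integer vector inside `ℝ^d`. -/
def intVecR {d : ℕ} (u : Fin d → ℤ) : Fin d → ℝ := fun i => (u i : ℝ)

/-- View an integer vector inside `ℚ^d`. -/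
def intVecQ {d : ℕ} (u : Fin d → ℤ) : Fin d → ℚ := fun i => (u i : ℚ)

/-- A (Laurent) polynomial: a finitely supported integer-valued function on `ℤ^d`. -/
def IsPoly {d : ℕ} (f : (Fin d → ℤ) → ℤ) : Prop := (Function.support f).Finite

/-- The product `(fc)(u) = ∑_v f(v) · c(u − v)` of a polynomial `f` with `c : ℤ^d → ℤ`. -/
noncomputable def polyApply {d : ℕ} (f : (Fin d → ℤ) → ℤ) (c : (Fin d → ℤ) → ℤ) :
    (Fin d → ℤ) → ℤ := fun u => ∑ᶠ v, f v * c (u - v)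

/-- The product `(fc)(u) = ∑_v f(v) · c(u − v)` of a polynomial `f` with `c : ℤ^d → ℂ`. -/
noncomputable def polyApplyC {d : ℕ} (f : (Fin d → ℤ) → ℤ) (c : (Fin d → ℤ) → ℂ) :
    (Fin d → ℤ) → ℂ := fun u => ∑ᶠ v, (f v : ℂ) * c (u - v)

/-- `c` is `v`-periodic: `c(u + v) = c(u)` for all `u`. -/
def Periodic {d : ℕ} (c : (Fin d → ℤ) → ℤ) (v : Fin d → ℤ) : Prop := ∀ u, c (u + v) = c u

/-- `c : ℤ^d → ℂ` is `v`-periodic. -/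
def PeriodicC {d : ℕ} (c : (Fin d → ℤ) → ℂ) (v : Fin d → ℤ) : Prop := ∀ u, c (u + v) = c u

/-- `c` is `k`-periodic: it has `k` periods that are linearly independent over `ℚ`. -/
def KPeriodic {d : ℕ} (k : ℕ) (c : (Fin d → ℤ) → ℤ) : Prop :=
  ∃ v : Fin k → (Fin d → ℤ),
    (LinearIndependent ℚ fun i => intVecQ (v i)) ∧ ∀ i, Periodic c (v i)

/-- `c` is strongly periodic: it is `d`-periodic. -/
def StronglyPeriodic {d : ℕ} (c : (Fin d → ℤ) → ℤ) : Prop := KPeriodic d c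

/-- `c : ℤ^d → ℂ` is strongly periodic. -/
def StronglyPeriodicC {d : ℕ} (c : (Fin d → ℤ) → ℂ) : Prop :=
  ∃ v : Fin d → (Fin d → ℤ),
    (LinearIndependent ℚ fun i => intVecQ (v i)) ∧ ∀ i, PeriodicC c (v i)

/-- Two nonzero integer vectors are non-parallel if they are linearly independent over `ℚ`. -/
def NonParallel {d : ℕ} (v w : Fin d → ℤ) : Prop :=
  LinearIndependent ℚ ![intVecQ v, intVecQ w]

/-- A line polynomial in direction `v`: a polynomial whose support contains at least two points
and is contained in `u + ℚv` for some `u ∈ ℤ^d`. -/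
def IsLinePoly {d : ℕ} (f : (Fin d → ℤ) → ℤ) (v : Fin d → ℤ) : Prop :=
  IsPoly f ∧ v ≠ 0 ∧ 2 ≤ (Function.support f).ncard ∧
    ∃ u : Fin d → ℤ, ∀ w ∈ Function.support f, ∃ q : ℚ, intVecQ w = intVecQ u + q • intVecQ v

/-- The difference polynomial `X^v − 1`: value `1` at `v`, value `−1` at `0`, and `0` elsewhere. -/
def diffPoly {d : ℕ} (v : Fin d → ℤ) : (Fin d → ℤ) → ℤ :=
  fun u => if u = v then 1 else if u = 0 then -1 else 0

/-- `c : ℤ^d → ℂ` is periodic in direction `v`: it is `kv`-periodic for some nonzero integer `k`. -/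
def PeriodicInDirC {d : ℕ} (c : (Fin d → ℤ) → ℂ) (v : Fin d → ℤ) : Prop :=
  ∃ k : ℤ, k ≠ 0 ∧ PeriodicC c (k • v)

/-- `c : ℤ^d → ℂ` is `V`-periodic for a linear subspace `V ⊆ ℝ^d`: it is periodic in
direction `v` for every nonzero integer vector `v` lying in `V`. -/
def VPeriodicC {d : ℕ} (V : Submodule ℝ (Fin d → ℝ)) (c : (Fin d → ℤ) → ℂ) : Prop :=
  ∀ v : Fin d → ℤ, v ≠ 0 → intVecR v ∈ V → PeriodicInDirC c v

/-- The discrete cube `C_m + t`. -/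
def cube {d : ℕ} (m : ℕ) (t : Fin d → ℤ) : Set (Fin d → ℤ) :=
  {u | ∀ i, |u i - t i| ≤ (m : ℤ)}

/-- `c : ℤ^d → ℤ` is sparse: for some positive integer `a`,
`|supp(c) ∩ (C_m + t)| ≤ a·m` for all positive `m` and all `t`. -/
def Sparse {d : ℕ} (c : (Fin d → ℤ) → ℤ) : Prop :=
  ∃ a : ℕ, 0 < a ∧ ∀ m : ℕ, 0 < m → ∀ t : Fin d → ℤ,
    (Function.support c ∩ cube m t).ncard ≤ a * m

/-- A `v`-fiber: a function whose support is contained in `w + ℚv` for some `w ∈ ℤ^d`. -/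
def IsFiber {d : ℕ} (e : (Fin d → ℤ) → ℤ) (v : Fin d → ℤ) : Prop :=
  ∃ w : Fin d → ℤ, ∀ x ∈ Function.support e, ∃ q : ℚ, intVecQ x = intVecQ w + q • intVecQ v

/-- `c` is a sum of finitely many periodic `v`-fibers. -/
def FinSumPeriodicFibers {d : ℕ} (v : Fin d → ℤ) (c : (Fin d → ℤ) → ℤ) : Prop :=
  ∃ (r : ℕ) (e : Fin r → ((Fin d → ℤ) → ℤ)), c = ∑ j, e j ∧
    ∀ j, IsFiber (e j) v ∧ ∃ w : Fin d → ℤ, w ≠ 0 ∧ Periodic (e j) w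

end PaperFormal

/-!
Let a Laurent polynomial `f` be a periodizer of `c` with nonzero constant coefficient. A prime
dilation `X ↦ X ^ q` is the Frobenius modulo `q`, so every `f (X ^ n)` with `n ≡ 1` modulo a fixed
integer `r` still annihilates `g = (X ^ w - 1) c`, where `w` is a period of `f c`: the values of
`f (X ^ n) g` are bounded independently of `n`, and divisible by large primes. A Vandermonde
elimination among the dilations `n = 1 + j r` yields that `∏ (X ^ (r v) - 1)`, over the nonzero
`v` in the support of `f`, annihilates `g`.

By independence, each rational subspace `W` of dimension less than `k` thus avoids the directions
`v` of one of the `k` periodizers, so `c` is torsion for the differences `X ^ u - 1` transverse to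
`W`.

Differences can be inverted by summation along lines. Therefore a function that is unipotent along
`W` (the differences `X ^ w - 1` with `w` a multiple of a vector of `W` act nilpotently) and
torsion transversally to `W` is a sum of functions unipotent along subspaces of one dimension
more. Induction on the dimension writes `c` as a sum of functions unipotent along `k`-dimensional
subspaces. As `c` takes finitely many values, it is not only unipotent but periodic along each
such `W` modulo transverse torsion. Hence each summand is a `W`-periodic function plus functions
unipotent along subspaces of dimension `k + 1`. The latter are sums of `k`-periodic functions:
differences in `n` pairwise independent directions of a plane have zero product on such a function
once `n` is large, which splits it into pieces with a period in one of these directions, and this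
can be repeated modulo the directions already found as long as fewer than `k` of them are.
-/

open Submodule Module
open scoped Pointwise AddMonoidAlgebra

namespace PaperFormal

variable {d : ℕ}

section LinearAlgebra

variable {K E : Type*} [Field K] [AddCommGroup E] [Module K E] {X : Submodule K E} {x y : E}

lemma exists_eq_one_and_le_ker (hx : x ∉ X) :
    ∃ l : E →ₗ[K] K, l x = 1 ∧ X ≤ LinearMap.ker l := by
  obtain ⟨l, hl, hX⟩ := Submodule.exists_le_ker_of_notMem hx
  refine ⟨(l x)⁻¹ • l, inv_mul_cancel₀ hl, fun y hy => ?_⟩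
  rw [LinearMap.mem_ker, LinearMap.smul_apply, LinearMap.mem_ker.1 (hX hy), smul_zero]

lemma finrank_eq_add_one_of_covBy [FiniteDimensional K E] {W W' : Submodule K E} (h : W ⋖ W') :
    finrank K W' = finrank K W + 1 := by
  obtain ⟨u, huW', hu⟩ := SetLike.exists_of_lt h.lt
  have hle : W ⊔ K ∙ u ≤ W' := sup_le h.le ((span_singleton_le_iff_mem _ _).2 huW')
  have hne : W ⊔ K ∙ u ≠ W := fun heq =>
    hu (heq ▸ mem_sup_right (mem_span_singleton_self u))
  rw [← finrank_sup_span_singleton hu, (h.eq_or_eq le_sup_left hle).resolve_left hne]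

lemma pairwise_add_nsmul_notMem_span_sup [CharZero K] (hx : x ∉ X) (hy : y ∉ K ∙ x ⊔ X) :
    Pairwise fun i j : ℕ => x + i • y ∉ K ∙ (x + j • y) ⊔ X := by
  intro i j hij hmem
  obtain ⟨_, hspan, z, hz, htz⟩ := mem_sup.1 hmem
  obtain ⟨t, rfl⟩ := mem_span_singleton.1 hspan
  obtain ⟨l, hly, hl⟩ := exists_eq_one_and_le_ker hy
  have hlx : l x = 0 := hl (mem_sup_left (mem_span_singleton_self x))
  have hlz : l z = 0 := hl (mem_sup_right hz)
  have hti : t * j = i := by simpa [hlx, hly, hlz] using congrArg l htz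
  have ht : t = 1 := by
    by_contra ht
    refine hx ((X.smul_mem_iff (sub_ne_zero.2 (Ne.symm ht))).1 ?_)
    have hxz : (1 - t) • x = z := by
      rw [← Nat.cast_smul_eq_nsmul K, ← Nat.cast_smul_eq_nsmul K, ← hti] at htz
      rw [eq_sub_of_add_eq' htz]
      module
    rwa [hxz]
  rw [ht, one_mul, Nat.cast_inj] at hti
  exact hij hti.symm

end LinearAlgebra

section RationalSpan

lemma intVecQ_add (u v : Fin d → ℤ) : intVecQ (u + v) = intVecQ u + intVecQ v := by
  ext; simp [intVecQ]

lemma intVecQ_sub (u v : Fin d → ℤ) : intVecQ (u - v) = intVecQ u - intVecQ v := by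
  ext; simp [intVecQ]

lemma intVecQ_zsmul (n : ℤ) (v : Fin d → ℤ) : intVecQ (n • v) = n • intVecQ v := by
  ext; simp [intVecQ]

lemma intVecQ_nsmul (n : ℕ) (v : Fin d → ℤ) : intVecQ (n • v) = n • intVecQ v := by
  ext; simp [intVecQ]

lemma intVecQ_injective : Function.Injective (intVecQ (d := d)) := fun _ _ h =>
  funext fun i => Int.cast_injective (α := ℚ) (congrFun h i)

lemma intVecQ_nsmul_mem_iff {n : ℕ} (hn : 0 < n) {V : Submodule ℚ (Fin d → ℚ)}
    {v : Fin d → ℤ} : intVecQ (n • v) ∈ V ↔ intVecQ v ∈ V := by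
  rw [intVecQ_nsmul, ← Nat.cast_smul_eq_nsmul ℚ]
  exact V.smul_mem_iff (by positivity)

lemma exists_intVecQ_eq_nsmul (x : Fin d → ℚ) :
    ∃ n : ℕ, 0 < n ∧ ∃ v : Fin d → ℤ, intVecQ v = n • x := by
  refine ⟨∏ i, (x i).den, Finset.prod_pos fun i _ => (x i).den_pos,
    fun i => (∏ j ∈ Finset.univ.erase i, ((x j).den : ℤ)) * (x i).num, funext fun i => ?_⟩
  simp only [intVecQ, Pi.smul_apply, nsmul_eq_mul,
    ← Finset.mul_prod_erase _ _ (Finset.mem_univ i)]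
  push_cast
  rw [mul_comm ((x i).den : ℚ), mul_assoc, mul_comm ((x i).den : ℚ), Rat.mul_den_eq_num]

lemma le_of_forall_intVecQ_mem {V Y : Submodule ℚ (Fin d → ℚ)}
    (h : ∀ v, intVecQ v ∈ V → intVecQ v ∈ Y) : V ≤ Y := by
  intro x hx
  obtain ⟨n, hn, v, hv⟩ := exists_intVecQ_eq_nsmul x
  have hmem := h v (hv ▸ V.smul_of_tower_mem n hx)
  rw [hv, ← Nat.cast_smul_eq_nsmul ℚ] at hmem
  exact (Y.smul_mem_iff (by positivity)).1 hmem

/-- The rational subspace of `ℚ^d` spanned by a subgroup of `ℤ^d`. -/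
def rationalSpan (H : AddSubgroup (Fin d → ℤ)) : Submodule ℚ (Fin d → ℚ) :=
  span ℚ (intVecQ '' H)

lemma intVecQ_mem_rationalSpan {H : AddSubgroup (Fin d → ℤ)} {v : Fin d → ℤ} (hv : v ∈ H) :
    intVecQ v ∈ rationalSpan H :=
  subset_span ⟨v, hv, rfl⟩

lemma exists_intVecQ_eq_nsmul_of_mem_rationalSpan {H : AddSubgroup (Fin d → ℤ)}
    {x : Fin d → ℚ} (hx : x ∈ rationalSpan H) :
    ∃ n : ℕ, 0 < n ∧ ∃ v ∈ H, intVecQ v = n • x := by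
  induction hx using span_induction with
  | mem x hx =>
    obtain ⟨v, hv, rfl⟩ := hx
    exact ⟨1, one_pos, v, hv, (one_nsmul _).symm⟩
  | zero => exact ⟨1, one_pos, 0, H.zero_mem, by ext; simp [intVecQ]⟩
  | add x y _ _ hx hy =>
    obtain ⟨m, hm, v, hv, hvx⟩ := hx
    obtain ⟨n, hn, w, hw, hwy⟩ := hy
    refine ⟨m * n, by positivity, n • v + m • w,
      H.add_mem (H.nsmul_mem hv n) (H.nsmul_mem hw m), ?_⟩
    rw [intVecQ_add, intVecQ_nsmul, intVecQ_nsmul, hvx, hwy]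
    module
  | smul q x _ hx =>
    obtain ⟨n, hn, v, hv, hvx⟩ := hx
    refine ⟨n * q.den, Nat.mul_pos hn q.den_pos, q.num • v, H.zsmul_mem hv _, ?_⟩
    have hq : (q.num : ℚ) = q.den * q := by rw [mul_comm, Rat.mul_den_eq_num]
    rw [intVecQ_zsmul, hvx, ← Int.cast_smul_eq_zsmul ℚ, hq]
    module

lemma intVecQ_mem_rationalSpan_iff {H : AddSubgroup (Fin d → ℤ)} {v : Fin d → ℤ} :
    intVecQ v ∈ rationalSpan H ↔ ∃ n : ℕ, 0 < n ∧ n • v ∈ H := by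
  constructor
  · intro hv
    obtain ⟨n, hn, w, hw, hwv⟩ := exists_intVecQ_eq_nsmul_of_mem_rationalSpan hv
    rw [← intVecQ_nsmul] at hwv
    exact ⟨n, hn, intVecQ_injective hwv ▸ hw⟩
  · rintro ⟨n, hn, hv⟩
    exact (intVecQ_nsmul_mem_iff hn).1 (intVecQ_mem_rationalSpan hv)

lemma rationalSpan_mono {H K : AddSubgroup (Fin d → ℤ)} (h : H ≤ K) :
    rationalSpan H ≤ rationalSpan K :=
  span_mono (Set.image_mono h)

lemma le_rationalSpan_of_forall {H K : AddSubgroup (Fin d → ℤ)} {V : Submodule ℚ (Fin d → ℚ)}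
    (hV : V ≤ rationalSpan H) (h : ∀ v ∈ H, intVecQ v ∈ V → v ∈ K) : V ≤ rationalSpan K := by
  refine le_of_forall_intVecQ_mem fun v hv => ?_
  obtain ⟨n, hn, hvn⟩ := intVecQ_mem_rationalSpan_iff.1 (hV hv)
  exact intVecQ_mem_rationalSpan_iff.2 ⟨n, hn, h _ hvn ((intVecQ_nsmul_mem_iff hn).2 hv)⟩

lemma exists_mem_and_intVecQ_notMem {H : AddSubgroup (Fin d → ℤ)}
    {V Y : Submodule ℚ (Fin d → ℚ)} (hV : V ≤ rationalSpan H) (hY : ¬ V ≤ Y) :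
    ∃ v ∈ H, intVecQ v ∈ V ∧ intVecQ v ∉ Y := by
  contrapose! hY
  refine le_of_forall_intVecQ_mem fun v hv => ?_
  obtain ⟨n, hn, hvn⟩ := intVecQ_mem_rationalSpan_iff.1 (hV hv)
  exact (intVecQ_nsmul_mem_iff hn).1 (hY _ hvn ((intVecQ_nsmul_mem_iff hn).2 hv))

lemma rationalSpan_inf (H K : AddSubgroup (Fin d → ℤ)) :
    rationalSpan (H ⊓ K) = rationalSpan H ⊓ rationalSpan K := by
  refine le_antisymm (le_inf (rationalSpan_mono inf_le_left) (rationalSpan_mono inf_le_right))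
    (le_of_forall_intVecQ_mem fun v hv => ?_)
  obtain ⟨m, hm, hvm⟩ := intVecQ_mem_rationalSpan_iff.1 hv.1
  obtain ⟨n, hn, hvn⟩ := intVecQ_mem_rationalSpan_iff.1 hv.2
  refine intVecQ_mem_rationalSpan_iff.2 ⟨m * n, by positivity, ?_, ?_⟩
  · exact mul_nsmul v m n ▸ H.nsmul_mem hvm n
  · exact mul_nsmul' v m n ▸ K.nsmul_mem hvn m

end RationalSpan

section Difference

/-- The ring of Laurent polynomials in `d` variables with integer coefficients. -/
abbrev LaurentRing (d : ℕ) : Type := ℤ[Fin d → ℤ]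

/-- The Laurent polynomial `X ^ v - 1`, which acts on functions by
`θ ↦ (u ↦ θ (u - v) - θ u)`. -/
noncomputable def difference (v : Fin d → ℤ) : LaurentRing d := AddMonoidAlgebra.single v 1 - 1

lemma difference_zero : difference (0 : Fin d → ℤ) = 0 := sub_self _

lemma difference_add (u v : Fin d → ℤ) :
    difference (u + v) = AddMonoidAlgebra.single u 1 * difference v + difference u := by
  simp only [difference, mul_sub, AddMonoidAlgebra.single_mul_single, mul_one, sub_add_sub_cancel]

lemma difference_neg (v : Fin d → ℤ) :
    difference (-v) = -AddMonoidAlgebra.single (-v) 1 * difference v := by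
  have h := difference_add (-v) v
  rw [neg_add_cancel, difference_zero] at h
  rw [neg_mul, eq_neg_iff_add_eq_zero, add_comm, ← h]

/-- The vectors `v` whose monomial `X ^ v` is congruent to `1` modulo `I`. -/
def differenceSubgroup (I : Ideal (LaurentRing d)) : AddSubgroup (Fin d → ℤ) where
  carrier := {v | difference v ∈ I}
  zero_mem' := by simp only [Set.mem_ofPred_eq, difference_zero, I.zero_mem]
  add_mem' {u v} hu hv := by
    simp only [Set.mem_ofPred_eq, difference_add u v]
    exact I.add_mem (I.mul_mem_left _ hv) hu
  neg_mem' {v} hv := by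
    simp only [Set.mem_ofPred_eq, difference_neg v]
    exact I.mul_mem_left _ hv

lemma mem_differenceSubgroup {I : Ideal (LaurentRing d)} {v : Fin d → ℤ} :
    v ∈ differenceSubgroup I ↔ difference v ∈ I := Iff.rfl

lemma differenceSubgroup_mono {I J : Ideal (LaurentRing d)} (h : I ≤ J) :
    differenceSubgroup I ≤ differenceSubgroup J := fun _ hv => h hv

lemma difference_dvd_difference_nsmul (n : ℕ) (v : Fin d → ℤ) :
    difference v ∣ difference (n • v) :=
  Ideal.mem_span_singleton.1 <| mem_differenceSubgroup.1 <|
    nsmul_mem (mem_differenceSubgroup.2 (Ideal.mem_span_singleton_self _)) n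

end Difference

section TorsionOf

variable {R M M' : Type*} [Semiring R] [AddCommMonoid M] [Module R M] [AddCommMonoid M']
  [Module R M']

lemma torsionOf_le_torsionOf_map (φ : M →ₗ[R] M') (x : M) :
    Ideal.torsionOf R M x ≤ Ideal.torsionOf R M' (φ x) := fun p hp => by
  rw [Ideal.mem_torsionOf_iff] at hp ⊢
  rw [← map_smul, hp, map_zero]

lemma torsionOf_inf_torsionOf_le_torsionOf_add (x y : M) :
    Ideal.torsionOf R M x ⊓ Ideal.torsionOf R M y ≤ Ideal.torsionOf R M (x + y) := fun p hp => by
  have hx := (Ideal.mem_torsionOf_iff _ _).1 hp.1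
  have hy := (Ideal.mem_torsionOf_iff _ _).1 hp.2
  rw [Ideal.mem_torsionOf_iff, smul_add, hx, hy, add_zero]

end TorsionOf

section PeriodSpace

variable {M M' : Type*} [AddCommGroup M] [Module (LaurentRing d) M]
  [AddCommGroup M'] [Module (LaurentRing d) M'] {x : M}

variable (d) in
/-- The rational subspace spanned by the periods of `x`, that is, by the vectors `v` with
`difference v • x = 0`. -/
noncomputable def periodSpace (x : M) : Submodule ℚ (Fin d → ℚ) :=
  rationalSpan (differenceSubgroup (Ideal.torsionOf (LaurentRing d) M x))

variable (d) in
/-- The rational subspace spanned by the vectors `v` such that `difference v` acts nilpotently on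
`x`. -/
noncomputable def unipotentSpace (x : M) : Submodule ℚ (Fin d → ℚ) :=
  rationalSpan (differenceSubgroup (Ideal.torsionOf (LaurentRing d) M x).radical)

lemma periodSpace_le_unipotentSpace (x : M) : periodSpace d x ≤ unipotentSpace d x :=
  rationalSpan_mono (differenceSubgroup_mono Ideal.le_radical)

lemma periodSpace_mono {y : M'}
    (h : Ideal.torsionOf (LaurentRing d) M x ≤ Ideal.torsionOf (LaurentRing d) M' y) :
    periodSpace d x ≤ periodSpace d y :=
  rationalSpan_mono (differenceSubgroup_mono h)

lemma unipotentSpace_mono {y : M'}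
    (h : Ideal.torsionOf (LaurentRing d) M x ≤ Ideal.torsionOf (LaurentRing d) M' y) :
    unipotentSpace d x ≤ unipotentSpace d y :=
  rationalSpan_mono (differenceSubgroup_mono (Ideal.radical_mono h))

lemma periodSpace_inf_le_add (x y : M) :
    periodSpace d x ⊓ periodSpace d y ≤ periodSpace d (x + y) := by
  rw [periodSpace, periodSpace, ← rationalSpan_inf]
  exact rationalSpan_mono fun v hv => torsionOf_inf_torsionOf_le_torsionOf_add x y hv

lemma unipotentSpace_inf_le_add (x y : M) :
    unipotentSpace d x ⊓ unipotentSpace d y ≤ unipotentSpace d (x + y) := by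
  rw [unipotentSpace, unipotentSpace, ← rationalSpan_inf]
  refine rationalSpan_mono fun v hv =>
    Ideal.radical_mono (torsionOf_inf_torsionOf_le_torsionOf_add x y) ?_
  rw [Ideal.radical_inf]
  exact hv

lemma intVecQ_mem_unipotentSpace_of_difference_smul {u : Fin d → ℤ}
    (hu : intVecQ u ∈ unipotentSpace d (difference u • x)) :
    intVecQ u ∈ unipotentSpace d x := by
  obtain ⟨n, hn, N, hN⟩ := intVecQ_mem_rationalSpan_iff.1 hu
  obtain ⟨p, hp⟩ := difference_dvd_difference_nsmul n u
  refine intVecQ_mem_rationalSpan_iff.2 ⟨n, hn, N + 1, ?_⟩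
  rw [Ideal.mem_torsionOf_iff] at hN ⊢
  calc difference (n • u) ^ (N + 1) • x
      = p • difference (n • u) ^ N • difference u • x := by
        rw [smul_smul, smul_smul]
        congr 1
        linear_combination difference (n • u) ^ N * hp
    _ = 0 := by rw [hN, smul_zero]

lemma periodSpace_zero : periodSpace d (0 : M) = ⊤ :=
  eq_top_iff.2 <| le_of_forall_intVecQ_mem fun v _ => intVecQ_mem_rationalSpan <| by
    simp only [mem_differenceSubgroup, Ideal.mem_torsionOf_iff, smul_zero]

variable (M) in
/-- The elements that are periodic along `X` and unipotent along `W`: every integer vector in `X`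
has a multiple that is a period, every integer vector in `W` one whose difference operator acts
nilpotently. -/
def mixed (X W : Submodule ℚ (Fin d → ℚ)) : Submodule (LaurentRing d) M where
  carrier := {x | X ≤ periodSpace d x ∧ W ≤ unipotentSpace d x}
  zero_mem' := ⟨periodSpace_zero.symm.le.trans' le_top,
    (periodSpace_zero.symm.le.trans' le_top).trans (periodSpace_le_unipotentSpace 0)⟩
  add_mem' {x y} hx hy := ⟨(le_inf hx.1 hy.1).trans (periodSpace_inf_le_add x y),
    (le_inf hx.2 hy.2).trans (unipotentSpace_inf_le_add x y)⟩
  smul_mem' p x hx :=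
    have h := torsionOf_le_torsionOf_map (LinearMap.lsmul (LaurentRing d) M p) x
    ⟨hx.1.trans (periodSpace_mono h), hx.2.trans (unipotentSpace_mono h)⟩

lemma mixed_anti {X X' W W' : Submodule ℚ (Fin d → ℚ)} (hX : X' ≤ X) (hW : W' ≤ W) :
    mixed M X W ≤ mixed M X' W' := fun _ hx => ⟨hX.trans hx.1, hW.trans hx.2⟩

lemma mem_mixed_self {X : Submodule ℚ (Fin d → ℚ)} : x ∈ mixed M X X ↔ X ≤ periodSpace d x :=
  ⟨And.left, fun h => ⟨h, h.trans (periodSpace_le_unipotentSpace x)⟩⟩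

lemma mixed_le_comap_mixed (φ : M →ₗ[LaurentRing d] M') (X W : Submodule ℚ (Fin d → ℚ)) :
    mixed M X W ≤ (mixed M' X W).comap φ := fun x hx =>
  ⟨hx.1.trans (periodSpace_mono (torsionOf_le_torsionOf_map φ x)),
    hx.2.trans (unipotentSpace_mono (torsionOf_le_torsionOf_map φ x))⟩

end PeriodSpace

section Translation

variable {A : Type*} [AddCommGroup A]

/-- Functions on `ℤ^d` with values in `A`. -/
abbrev LatticeFunction (d : ℕ) (A : Type*) : Type _ := (Fin d → ℤ) → A

variable (d A) in
/-- The action of `ℤ^d` by translations on the functions `ℤ^d → A`. -/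
def translation : Multiplicative (Fin d → ℤ) →* Module.End ℤ (LatticeFunction d A) where
  toFun v :=
    { toFun := fun θ u => θ (u - v.toAdd)
      map_add' := fun _ _ => rfl
      map_smul' := fun _ _ => rfl }
  map_one' := by ext θ u; exact congrArg θ (sub_zero u)
  map_mul' v w := by ext θ u; exact congrArg θ (sub_add_eq_sub_sub u v.toAdd w.toAdd)

/-- Laurent polynomials act on functions by convolution. -/
noncomputable scoped instance translationModule : Module (LaurentRing d) (LatticeFunction d A) :=
  Module.compHom _ (AddMonoidAlgebra.lift ℤ (Module.End ℤ (LatticeFunction d A)) (Fin d → ℤ)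
    (translation d A)).toRingHom

lemma single_smul_apply (v : Fin d → ℤ) (n : ℤ) (θ : LatticeFunction d A) (u : Fin d → ℤ) :
    ((AddMonoidAlgebra.single v n : LaurentRing d) • θ) u = n • θ (u - v) := by
  change AddMonoidAlgebra.lift ℤ _ _ (translation d A) (AddMonoidAlgebra.single v n) θ u = _
  rw [AddMonoidAlgebra.lift_single]
  rfl

lemma laurent_smul_apply (p : LaurentRing d) (θ : LatticeFunction d A) (u : Fin d → ℤ) :
    (p • θ) u = ∑ v ∈ p.coeff.support, p.coeff v • θ (u - v) := by
  conv_lhs => rw [← p.sum_coeff_single]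
  simp only [Finsupp.sum, Finset.sum_smul, Finset.sum_apply, single_smul_apply]

lemma difference_smul_apply (v : Fin d → ℤ) (θ : LatticeFunction d A) (u : Fin d → ℤ) :
    (difference v • θ) u = θ (u - v) - θ u := by
  rw [difference, sub_smul, one_smul, Pi.sub_apply, single_smul_apply, one_smul]

lemma difference_smul_eq_zero_iff {v : Fin d → ℤ} {θ : LatticeFunction d A} :
    difference v • θ = 0 ↔ Function.Periodic θ v := by
  simp only [Function.Periodic, funext_iff, difference_smul_apply, Pi.zero_apply, sub_eq_zero]
  exact ⟨fun h u => by rw [← h, add_sub_cancel_right], fun h u => by rw [← h, sub_add_cancel]⟩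

end Translation

section Antidifference

variable {A : Type*} [AddCommGroup A]

/-- The sum `a 1 + ⋯ + a j`, extended to negative `j` so that consecutive values differ
by the terms of `a`. -/
noncomputable def indefiniteSum (a : ℤ → A) (j : ℤ) : A :=
  ∑ i ∈ Finset.Ioc 0 j, a i - ∑ i ∈ Finset.Ioc j 0, a i

lemma indefiniteSum_sub_indefiniteSum_pred (a : ℤ → A) (j : ℤ) :
    indefiniteSum a j - indefiniteSum a (j - 1) = a j := by
  rw [indefiniteSum, indefiniteSum]
  rcases le_or_gt 1 j with hj | hj
  · rw [Finset.Ioc_eq_empty (a := j) (by lia), Finset.Ioc_eq_empty (a := j - 1) (by lia),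
      ← Finset.insert_Ioc_sub_one_right_eq_Ioc (a := 0) (by lia), Finset.sum_insert (by simp)]
    simp
  · rw [Finset.Ioc_eq_empty (a := 0) (by lia), Finset.Ioc_eq_empty (a := 0) (by lia),
      ← Finset.insert_Ioc_left_eq_Ioc_sub_one (b := 0) (by lia), Finset.sum_insert (by simp)]
    simp

/-- The right inverse of `difference u` that sums along the direction `u`, starting from the
integer points `g` with `⌊l g⌋ = 0`; it needs `l u = 1`. -/
noncomputable def antidifference (u : Fin d → ℤ) (l : (Fin d → ℚ) →ₗ[ℚ] ℚ)
    (θ : LatticeFunction d A) : LatticeFunction d A := fun g =>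
  -indefiniteSum (fun i => θ (g + (i - ⌊l (intVecQ g)⌋) • u)) ⌊l (intVecQ g)⌋

variable {u v : Fin d → ℤ} {l : (Fin d → ℚ) →ₗ[ℚ] ℚ}

lemma difference_smul_antidifference (hu : l (intVecQ u) = 1) (θ : LatticeFunction d A) :
    difference u • antidifference u l θ = θ := by
  ext g
  have hpoints : ∀ i : ℤ, g - u + (i - (⌊l (intVecQ g)⌋ - 1)) • u =
      g + (i - ⌊l (intVecQ g)⌋) • u := fun i => by module
  have hstep := indefiniteSum_sub_indefiniteSum_pred
    (fun i => θ (g + (i - ⌊l (intVecQ g)⌋) • u)) ⌊l (intVecQ g)⌋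
  rw [sub_self, zero_smul, add_zero] at hstep
  rw [difference_smul_apply, antidifference, antidifference, intVecQ_sub, map_sub, hu,
    Int.floor_sub_one, sub_neg_eq_add, neg_add_eq_sub]
  simp only [hpoints]
  exact hstep

lemma antidifference_difference_smul (hv : l (intVecQ v) = 0) (θ : LatticeFunction d A) :
    antidifference u l (difference v • θ) = difference v • antidifference u l θ := by
  ext g
  have hpoints : ∀ n : ℤ, g + n • u - v = g - v + n • u := fun n => by module
  rw [difference_smul_apply, antidifference, antidifference, antidifference, intVecQ_sub, map_sub,
    hv, sub_zero]
  simp only [indefiniteSum, difference_smul_apply, hpoints, Finset.sum_sub_distrib]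
  abel

lemma antidifference_zero : antidifference u l (0 : LatticeFunction d A) = 0 := by
  ext g
  simp only [antidifference, indefiniteSum, Pi.zero_apply, Finset.sum_const_zero, sub_self,
    neg_zero]

lemma antidifference_difference_pow_smul (hv : l (intVecQ v) = 0) (n : ℕ)
    (θ : LatticeFunction d A) :
    antidifference u l (difference v ^ n • θ) = difference v ^ n • antidifference u l θ := by
  induction n with
  | zero => rw [pow_zero, one_smul, one_smul]
  | succ n ih => rw [pow_succ', mul_smul, antidifference_difference_smul hv, ih, ← mul_smul]

variable {V : Submodule ℚ (Fin d → ℚ)} {θ : LatticeFunction d A}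

lemma le_periodSpace_antidifference (hl : V ≤ LinearMap.ker l) (hV : V ≤ periodSpace d θ) :
    V ≤ periodSpace d (antidifference u l θ) :=
  le_rationalSpan_of_forall hV fun v hv hvV => by
    rw [mem_differenceSubgroup, Ideal.mem_torsionOf_iff] at hv ⊢
    rw [← antidifference_difference_smul (hl hvV), hv, antidifference_zero]

lemma le_unipotentSpace_antidifference (hl : V ≤ LinearMap.ker l)
    (hV : V ≤ unipotentSpace d θ) : V ≤ unipotentSpace d (antidifference u l θ) :=
  le_rationalSpan_of_forall hV fun v ⟨n, hv⟩ hvV => by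
    refine ⟨n, ?_⟩
    rw [Ideal.mem_torsionOf_iff] at hv ⊢
    rw [← antidifference_difference_pow_smul (hl hvV), hv, antidifference_zero]

theorem mixed_le_difference_smul_mixed {X W : Submodule ℚ (Fin d → ℚ)} (hXW : X ≤ W)
    (hu : intVecQ u ∉ X) :
    mixed (LatticeFunction d A) X W ≤ difference u • mixed (LatticeFunction d A) X W := by
  refine fun θ ⟨hθX, hθW⟩ => (Submodule.mem_smul_pointwise_iff_exists _ _ _).2 ?_
  by_cases huW : intVecQ u ∈ W
  · obtain ⟨l, hl, hX⟩ := exists_eq_one_and_le_ker hu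
    have hdiff := difference_smul_antidifference hl θ
    refine ⟨antidifference u l θ, ⟨le_periodSpace_antidifference hX hθX, ?_⟩, hdiff⟩
    have hker : W ⊓ LinearMap.ker l ≤ unipotentSpace d (antidifference u l θ) :=
      le_unipotentSpace_antidifference inf_le_right (inf_le_left.trans hθW)
    have hmem : intVecQ u ∈ unipotentSpace d (antidifference u l θ) :=
      intVecQ_mem_unipotentSpace_of_difference_smul (hdiff.symm ▸ hθW huW)
    intro x hx
    rw [← sub_add_cancel x (l x • intVecQ u)]
    refine add_mem (hker ⟨sub_mem hx (W.smul_mem _ huW), ?_⟩) (smul_mem _ _ hmem)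
    rw [SetLike.mem_coe, LinearMap.mem_ker, map_sub, map_smul, hl, smul_eq_mul, mul_one, sub_self]
  · obtain ⟨l, hl, hW⟩ := exists_eq_one_and_le_ker huW
    exact ⟨antidifference u l θ, ⟨le_periodSpace_antidifference (hXW.trans hW) hθX,
      le_unipotentSpace_antidifference hW hθW⟩, difference_smul_antidifference hl θ⟩

end Antidifference

section SubmoduleLemmas

variable {R M ι : Type*} [CommRing R] [AddCommGroup M] [Module R M]

lemma exists_mem_sub_mem_and_smul_sub_eq_zero {N P : Submodule R M} {a : R} {x : M}
    (hN : N ≤ a • N) (hNP : N ≤ P) (hx : x ∈ P) (hax : a • x ∈ N) :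
    ∃ y ∈ N, x - y ∈ P ∧ a • (x - y) = 0 := by
  obtain ⟨y, hy, hyx⟩ := (Submodule.mem_smul_pointwise_iff_exists _ _ _).1 (hN hax)
  exact ⟨y, hy, P.sub_mem hx (hNP hy), by rw [smul_sub, hyx, sub_self]⟩

lemma mem_iSup_inf_of_forall_mem {N T : ι → Submodule R M} (hNT : ∀ i j, i ≠ j → N j ≤ T i)
    {x : M} (hx : x ∈ ⨆ i, N i) (hxT : ∀ i, x ∈ T i) : x ∈ ⨆ i, N i ⊓ T i := by
  classical
  obtain ⟨φ, hφ, rfl⟩ := (mem_iSup_iff_exists_finsupp _ _).1 hx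
  refine Submodule.sum_mem _ fun i hi => mem_iSup_of_mem i ⟨hφ i, ?_⟩
  have hrest : ∑ j ∈ φ.support.erase i, φ j ∈ T i :=
    Submodule.sum_mem _ fun j hj => hNT i j (Finset.ne_of_mem_erase hj).symm (hφ j)
  have htotal : φ i + ∑ j ∈ φ.support.erase i, φ j ∈ T i :=
    Finset.add_sum_erase _ φ hi ▸ hxT i
  exact (Submodule.add_mem_iff_left _ hrest).1 htotal

end SubmoduleLemmas

section TransverseTorsion

variable {M : Type*} [AddCommGroup M] [Module (LaurentRing d) M] {A : Type*} [AddCommGroup A]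
  {X W W' : Submodule ℚ (Fin d → ℚ)}

/-- The multiplicative set generated by the differences in directions outside `W`. -/
noncomputable def transverseMonoid (W : Submodule ℚ (Fin d → ℚ)) : Submonoid (LaurentRing d) :=
  Submonoid.closure (difference '' {u | intVecQ u ∉ W})

variable (M) in
/-- The elements annihilated by a product of differences in directions outside `W`. -/
noncomputable def transverseTorsion (W : Submodule ℚ (Fin d → ℚ)) : Submodule (LaurentRing d) M :=
  torsion' (LaurentRing d) M (transverseMonoid W)

lemma mem_transverseTorsion {x : M} :
    x ∈ transverseTorsion M W ↔ ∃ a ∈ transverseMonoid W, a • x = 0 := by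
  rw [transverseTorsion, mem_torsion'_iff]
  exact ⟨fun ⟨a, ha⟩ => ⟨a, a.2, ha⟩, fun ⟨a, haW, ha⟩ => ⟨⟨a, haW⟩, ha⟩⟩

lemma difference_mem_transverseMonoid {u : Fin d → ℤ} (hu : intVecQ u ∉ W) :
    difference u ∈ transverseMonoid W :=
  Submonoid.subset_closure ⟨u, hu, rfl⟩

lemma mixed_le_transverseTorsion (h : ¬ W' ≤ W) : mixed M X W' ≤ transverseTorsion M W := by
  rintro x ⟨-, hx⟩
  obtain ⟨v, ⟨n, hv⟩, -, hvW⟩ := exists_mem_and_intVecQ_notMem hx h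
  exact mem_transverseTorsion.2
    ⟨difference v ^ n, pow_mem (difference_mem_transverseMonoid hvW) n, hv⟩

lemma mem_mixed_sup_left {x : M} {u : Fin d → ℤ} (hx : x ∈ mixed M X W)
    (hu : difference u • x = 0) : x ∈ mixed M (ℚ ∙ intVecQ u ⊔ X) W :=
  ⟨sup_le ((span_singleton_le_iff_mem _ _).2
    (intVecQ_mem_rationalSpan ((Ideal.mem_torsionOf_iff _ _).2 hu))) hx.1, hx.2⟩

lemma mem_mixed_sup_right {x : M} {u : Fin d → ℤ} (hx : x ∈ mixed M X W)
    (hu : difference u • x = 0) : x ∈ mixed M X (ℚ ∙ intVecQ u ⊔ W) :=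
  ⟨hx.1, sup_le ((span_singleton_le_iff_mem _ _).2 (intVecQ_mem_rationalSpan
    (Ideal.le_radical ((Ideal.mem_torsionOf_iff _ _).2 hu)))) hx.2⟩

lemma iSup_mixed_le_difference_smul (hXW : X ≤ W) {u : Fin d → ℤ} (hu : intVecQ u ∉ X) :
    ⨆ W', ⨆ (_ : W ⋖ W'), mixed (LatticeFunction d A) X W' ≤
      difference u • ⨆ W', ⨆ (_ : W ⋖ W'), mixed (LatticeFunction d A) X W' :=
  iSup₂_le fun W' hW' => (mixed_le_difference_smul_mixed (hXW.trans hW'.le) hu).trans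
    (smul_mono_right _ (le_iSup₂_of_le W' hW' le_rfl))

lemma iSup_mixed_le_mixed : ⨆ W', ⨆ (_ : W ⋖ W'), mixed M X W' ≤ mixed M X W :=
  iSup₂_le fun _ hW' => mixed_anti le_rfl hW'.le

theorem mixed_inf_transverseTorsion_le (hXW : X ≤ W) :
    mixed (LatticeFunction d A) X W ⊓ transverseTorsion (LatticeFunction d A) W ≤
      ⨆ W', ⨆ (_ : W ⋖ W'), mixed (LatticeFunction d A) X W' := by
  rintro θ ⟨hθ, hθT⟩
  obtain ⟨a, ha, haθ⟩ := mem_transverseTorsion.1 hθT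
  suffices h : ∀ η ∈ mixed (LatticeFunction d A) X W,
      a • η ∈ ⨆ W', ⨆ (_ : W ⋖ W'), mixed (LatticeFunction d A) X W' →
      η ∈ ⨆ W', ⨆ (_ : W ⋖ W'), mixed (LatticeFunction d A) X W' from
    h θ hθ (haθ ▸ zero_mem _)
  clear haθ hθ hθT
  induction ha using Submonoid.closure_induction with
  | one => exact fun η _ hη => one_smul (LaurentRing d) η ▸ hη
  | mul a b _ _ iha ihb =>
    exact fun η hη hab => ihb η hη (iha _ (smul_mem _ b hη) (mul_smul a b η ▸ hab))
  | mem a ha =>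
    obtain ⟨u, hu, rfl⟩ := ha
    intro η hη hdη
    obtain ⟨y, hy, hηy, hdy⟩ := exists_mem_sub_mem_and_smul_sub_eq_zero
      (iSup_mixed_le_difference_smul hXW fun h => hu (hXW h)) iSup_mixed_le_mixed hη hdη
    rw [← sub_add_cancel η y]
    exact add_mem (mem_iSup_of_mem _ (mem_iSup_of_mem (covBy_span_singleton_sup hu)
      (mem_mixed_sup_right hηy hdy))) hy

end TransverseTorsion

section Straightening

variable {A : Type*} [AddCommGroup A]

variable (A) in
/-- The functions whose class modulo transverse torsion is periodic along `W`. -/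
noncomputable def periodicModTransverse (W : Submodule ℚ (Fin d → ℚ)) :
    Submodule (LaurentRing d) (LatticeFunction d A) :=
  (mixed (LatticeFunction d A ⧸ transverseTorsion (LatticeFunction d A) W) W W).comap (mkQ _)

variable {X W : Submodule ℚ (Fin d → ℚ)}

lemma mem_periodicModTransverse {θ : LatticeFunction d A} :
    θ ∈ periodicModTransverse A W ↔
      W ≤ periodSpace d (mkQ (transverseTorsion (LatticeFunction d A) W) θ) := by
  rw [periodicModTransverse, mem_comap]
  exact mem_mixed_self

lemma transverseTorsion_le_periodicModTransverse :
    transverseTorsion (LatticeFunction d A) W ≤ periodicModTransverse A W :=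
  le_comap_mkQ _ _

lemma exists_difference_smul_mem_transverseTorsion {θ : LatticeFunction d A}
    (hθ : θ ∈ periodicModTransverse A W) (hWX : ¬ W ≤ X) :
    ∃ u, intVecQ u ∈ W ∧ intVecQ u ∉ X ∧
      difference u • θ ∈ transverseTorsion (LatticeFunction d A) W := by
  obtain ⟨u, hu, huW, huX⟩ := exists_mem_and_intVecQ_notMem hθ.1 hWX
  refine ⟨u, huW, huX, ?_⟩
  rwa [mem_differenceSubgroup, Ideal.mem_torsionOf_iff, ← map_smul, mkQ_apply,
    Quotient.mk_eq_zero] at hu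

theorem mixed_inf_periodicModTransverse_le (hXW : X ≤ W) :
    mixed (LatticeFunction d A) X W ⊓ periodicModTransverse A W ≤
      mixed (LatticeFunction d A) W W ⊔
        ⨆ W', ⨆ (_ : W ⋖ W'), mixed (LatticeFunction d A) ⊥ W' := by
  induction X using WellFoundedGT.induction with
  | ind X ih =>
  rintro θ ⟨hθ, hθP⟩
  by_cases hWX : W ≤ X
  · exact mem_sup_left (mixed_anti hWX le_rfl hθ)
  · obtain ⟨u, huW, huX, hu⟩ := exists_difference_smul_mem_transverseTorsion hθP hWX
    obtain ⟨y, hy, hθy, hdy⟩ := exists_mem_sub_mem_and_smul_sub_eq_zero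
      (iSup_mixed_le_difference_smul hXW huX) iSup_mixed_le_mixed hθ
      (mixed_inf_transverseTorsion_le hXW ⟨smul_mem _ _ hθ, hu⟩)
    have hyP : y ∈ periodicModTransverse A W := by
      refine transverseTorsion_le_periodicModTransverse ?_
      exact iSup₂_le (fun W' hW' => mixed_le_transverseTorsion hW'.lt.not_ge) hy
    have hyD : y ∈ ⨆ W', ⨆ (_ : W ⋖ W'), mixed (LatticeFunction d A) ⊥ W' :=
      iSup₂_mono (fun W' _ => mixed_anti bot_le le_rfl) hy
    rw [← sub_add_cancel θ y]
    exact add_mem (ih _ (covBy_span_singleton_sup huX).lt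
      (sup_le ((span_singleton_le_iff_mem _ _).2 huW) hXW)
      ⟨mem_mixed_sup_left hθy hdy, sub_mem hθP hyP⟩) (mem_sup_right hyD)

end Straightening

section FiniteRange

variable {A : Type*} [AddCommGroup A]

lemma finite_range_smul (p : LaurentRing d) {θ : LatticeFunction d A} (hθ : (Set.range θ).Finite) :
    (Set.range (p • θ)).Finite := by
  induction p using AddMonoidAlgebra.induction_linear with
  | zero =>
    rw [zero_smul]
    exact Set.finite_range_const
  | add p q hp hq =>
    rw [add_smul]
    refine (hp.add hq).subset ?_
    rintro _ ⟨u, rfl⟩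
    exact Set.add_mem_add ⟨u, rfl⟩ ⟨u, rfl⟩
  | single v n =>
    refine (hθ.image (n • ·)).subset ?_
    rintro _ ⟨u, rfl⟩
    exact ⟨θ (u - v), ⟨u - v, rfl⟩, (single_smul_apply v n θ u).symm⟩

/-- A function with constant differences along `v` grows linearly, so it must be `v`-periodic if it
takes finitely many values. -/
lemma difference_smul_eq_zero_of_sq [IsAddTorsionFree A] {θ : LatticeFunction d A}
    (hθ : (Set.range θ).Finite) {v : Fin d → ℤ} (h : difference v • difference v • θ = 0) :
    difference v • θ = 0 := by
  ext u
  have hlin : ∀ n : ℕ, θ (u + n • v) = θ u - n • (difference v • θ) u := by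
    intro n
    induction n with
    | zero => simp only [zero_smul, add_zero, sub_zero]
    | succ n ih =>
      have hconst := (difference_smul_eq_zero_iff.1 h).nsmul (n + 1) u
      rw [difference_smul_apply, succ_nsmul, ← add_assoc, add_sub_cancel_right, ih] at hconst
      rw [succ_nsmul v, ← add_assoc]
      rw [succ_nsmul, ← sub_sub, sub_eq_iff_eq_add.1 hconst]
      abel
  by_contra hu
  have hinj : Function.Injective fun n : ℕ => θ (u + n • v) := fun m n hmn => by
    simp only [hlin, sub_right_inj] at hmn
    exact injective_nsmul_iff_not_isOfFinAddOrder.2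
      (not_isOfFinAddOrder_of_isAddTorsionFree hu) hmn
  refine Set.infinite_range_of_injective hinj (hθ.subset ?_)
  rintro _ ⟨n, rfl⟩
  exact ⟨_, rfl⟩

lemma difference_smul_eq_zero_of_pow [IsAddTorsionFree A] {θ : LatticeFunction d A}
    (hθ : (Set.range θ).Finite) {v : Fin d → ℤ} {n : ℕ} (h : difference v ^ n • θ = 0) :
    difference v • θ = 0 := by
  induction n generalizing θ with
  | zero => rw [pow_zero, one_smul] at h; rw [h, smul_zero]
  | succ n ih =>
    rw [pow_succ, mul_smul] at h
    exact difference_smul_eq_zero_of_sq hθ (ih (finite_range_smul _ hθ) h)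

theorem unipotentSpace_mkQ_le_periodSpace_mkQ [IsAddTorsionFree A] {θ : LatticeFunction d A}
    (hθ : (Set.range θ).Finite) (W : Submodule ℚ (Fin d → ℚ)) :
    unipotentSpace d (mkQ (transverseTorsion (LatticeFunction d A) W) θ) ≤
      periodSpace d (mkQ (transverseTorsion (LatticeFunction d A) W) θ) := by
  refine rationalSpan_mono fun v ⟨n, hv⟩ => ?_
  rw [Ideal.mem_torsionOf_iff, ← map_smul, mkQ_apply, Quotient.mk_eq_zero,
    mem_transverseTorsion] at hv
  obtain ⟨a, ha, hav⟩ := hv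
  rw [mem_differenceSubgroup, Ideal.mem_torsionOf_iff, ← map_smul, mkQ_apply, Quotient.mk_eq_zero,
    mem_transverseTorsion]
  refine ⟨a, ha, ?_⟩
  rw [smul_comm] at hav ⊢
  exact difference_smul_eq_zero_of_pow (finite_range_smul a hθ) hav

end FiniteRange

section LagrangeAnnihilator

lemma mul_prod_sub_mem_of_sum_mul_pow_mem {R ι : Type*} [CommRing R] [DecidableEq ι] {I : Ideal R}
    {s : Finset ι} {a y : ι → R} (h : ∀ j : ℕ, ∑ i ∈ s, a i * y i ^ j ∈ I) {i : ι} (hi : i ∈ s) :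
    a i * ∏ w ∈ s.erase i, (y w - y i) ∈ I := by
  have heval : ∀ q : Polynomial R, ∑ w ∈ s, a w * q.eval (y w) ∈ I := by
    intro q
    induction q using Polynomial.induction_on' with
    | add q r hq hr =>
      simp only [Polynomial.eval_add, mul_add, Finset.sum_add_distrib]
      exact I.add_mem hq hr
    | monomial n b =>
      simp only [Polynomial.eval_monomial, mul_left_comm _ b, ← Finset.mul_sum]
      exact I.mul_mem_left b (h n)
  have hprod := heval (∏ w ∈ s.erase i, (Polynomial.C (y w) - Polynomial.X))
  simp only [Polynomial.eval_prod, Polynomial.eval_sub, Polynomial.eval_C,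
    Polynomial.eval_X] at hprod
  rwa [Finset.sum_eq_single_of_mem i hi fun w hw hwi => ?_] at hprod
  rw [Finset.prod_eq_zero (Finset.mem_erase.2 ⟨hwi, hw⟩) (sub_self _), mul_zero]

end LagrangeAnnihilator

section Dilation

variable {p : LaurentRing d} {θ : LatticeFunction d ℤ}

/-- The substitution `X ↦ X ^ n` in Laurent polynomials. -/
noncomputable def dilation (n : ℕ) : LaurentRing d →+* LaurentRing d :=
  AddMonoidAlgebra.mapDomainRingHom ℤ (nsmulAddMonoidHom n)

lemma dilation_single (n : ℕ) (v : Fin d → ℤ) (a : ℤ) :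
    dilation n (AddMonoidAlgebra.single v a) = AddMonoidAlgebra.single (n • v) a :=
  AddMonoidAlgebra.mapDomain_single

lemma dilation_one (p : LaurentRing d) : dilation 1 p = p := by
  induction p using AddMonoidAlgebra.induction_linear with
  | zero => exact map_zero _
  | add p q hp hq => rw [map_add, hp, hq]
  | single v a => rw [dilation_single, one_smul]

lemma dilation_mul (m n : ℕ) (p : LaurentRing d) :
    dilation (m * n) p = dilation m (dilation n p) := by
  induction p using AddMonoidAlgebra.induction_linear with
  | zero => simp only [map_zero]
  | add p q hp hq => simp only [map_add, hp, hq]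
  | single v a => simp only [dilation_single, mul_smul]

lemma dilation_eq_sum (n : ℕ) (p : LaurentRing d) :
    dilation n p = ∑ v ∈ p.coeff.support, AddMonoidAlgebra.single (n • v) (p.coeff v) := by
  conv_lhs => rw [← p.sum_coeff_single]
  simp only [Finsupp.sum, map_sum, dilation_single]

lemma dilation_smul_apply (n : ℕ) (p : LaurentRing d) (θ : LatticeFunction d ℤ) (u : Fin d → ℤ) :
    (dilation n p • θ) u = ∑ v ∈ p.coeff.support, p.coeff v * θ (u - n • v) := by
  simp only [dilation_eq_sum, Finset.sum_smul, Finset.sum_apply, single_smul_apply, smul_eq_mul]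

lemma abs_dilation_smul_le {B : ℤ} (hB : ∀ u, |θ u| ≤ B) (n : ℕ) (p : LaurentRing d)
    (u : Fin d → ℤ) : |(dilation n p • θ) u| ≤ (∑ v ∈ p.coeff.support, |p.coeff v|) * B := by
  rw [dilation_smul_apply, Finset.sum_mul]
  refine (Finset.abs_sum_le_sum_abs _ _).trans (Finset.sum_le_sum fun v _ => ?_)
  rw [abs_mul]
  exact mul_le_mul_of_nonneg_left (hB _) (abs_nonneg _)

theorem natCast_dvd_dilation_sub_pow {q : ℕ} (hq : q.Prime) (p : LaurentRing d) :
    (q : LaurentRing d) ∣ dilation q p - p ^ q := by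
  induction p using AddMonoidAlgebra.induction_linear with
  | zero => rw [map_zero, zero_pow hq.ne_zero, sub_zero]; exact dvd_zero _
  | add p r hp hr =>
    obtain ⟨s, hs⟩ := exists_add_pow_prime_eq hq p r
    rw [map_add, hs, sub_add_eq_sub_sub, add_sub_add_comm, mul_assoc, mul_assoc]
    exact dvd_sub (dvd_add hp hr) (dvd_mul_right _ _)
  | single v a =>
    have := Fact.mk hq
    obtain ⟨b, hb⟩ : (q : ℤ) ∣ a - a ^ q :=
      (ZMod.intCast_eq_intCast_iff_dvd_sub _ _ _).1 (by push_cast; exact ZMod.pow_card _)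
    rw [dilation_single, AddMonoidAlgebra.single_pow, ← AddMonoidAlgebra.single_sub, hb,
      ← nsmul_eq_mul, ← AddMonoidAlgebra.smul_single, nsmul_eq_mul]
    exact dvd_mul_right _ _

/-- Modulo `q` the dilation is the Frobenius, so the values of the product are divisible by `q`;
they are also smaller than `q`. -/
lemma dilation_smul_eq_zero_of_prime {q n : ℕ} (hq : q.Prime) (h : dilation n p • θ = 0)
    (hlt : ∀ u, |(dilation (q * n) p • θ) u| < q) : dilation (q * n) p • θ = 0 := by
  obtain ⟨r, hr⟩ := natCast_dvd_dilation_sub_pow hq (dilation n p)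
  have hpow : dilation n p ^ q • θ = 0 := by
    rw [← Nat.sub_add_cancel hq.one_le, pow_succ, mul_smul, h, smul_zero]
  have hmul : dilation (q * n) p • θ = q • r • θ := by
    rw [dilation_mul, eq_add_of_sub_eq hr, add_smul, hpow, add_zero, mul_smul,
      Nat.cast_smul_eq_nsmul]
  ext u
  refine Int.eq_zero_of_abs_lt_dvd ?_ (hlt u)
  rw [hmul, Pi.smul_apply, nsmul_eq_mul]
  exact dvd_mul_right _ _

lemma exists_forall_dilation_smul_eq_zero (hθ : (Set.range θ).Finite) (hp : p • θ = 0) :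
    ∃ r : ℕ, 0 < r ∧ ∀ j : ℕ, dilation (1 + j * r) p • θ = 0 := by
  obtain ⟨B, hB⟩ := (hθ.image (|·|)).bddAbove
  replace hB : ∀ u, |θ u| ≤ B := fun u => hB ⟨θ u, ⟨u, rfl⟩, rfl⟩
  obtain ⟨K, hK⟩ := exists_nat_ge ((∑ v ∈ p.coeff.support, |p.coeff v|) * B)
  have hdil : ∀ m : ℕ, m ≠ 0 → (∀ q : ℕ, q.Prime → q ∣ m → K < q) → dilation m p • θ = 0 := by
    intro m
    induction m using induction_on_primes with
    | zero => exact fun h => absurd rfl h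
    | one => exact fun _ _ => by rwa [dilation_one]
    | prime_mul q m hq ih =>
      intro hm hlarge
      refine dilation_smul_eq_zero_of_prime hq (ih (right_ne_zero_of_mul hm)
        fun l hl hlm => hlarge l hl (hlm.mul_left q)) fun u => ?_
      calc |(dilation (q * m) p • θ) u| ≤ K := (abs_dilation_smul_le hB _ p u).trans hK
        _ < q := mod_cast hlarge q hq (dvd_mul_right q m)
  refine ⟨K.factorial, K.factorial_pos, fun j => hdil _ (by positivity) fun q hq hqm => ?_⟩
  by_contra! hqK
  exact hq.not_dvd_one
    ((Nat.dvd_add_left ((hq.dvd_factorial.2 hqK).mul_left j)).1 hqm)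

theorem exists_prod_difference_smul_eq_zero (hθ : (Set.range θ).Finite) (hp : p • θ = 0)
    (h0 : p.coeff 0 ≠ 0) :
    ∃ r : ℕ, 0 < r ∧ (∏ w ∈ p.coeff.support.erase 0, difference (r • w)) • θ = 0 := by
  obtain ⟨r, hr, hdil⟩ := exists_forall_dilation_smul_eq_zero hθ hp
  refine ⟨r, hr, ?_⟩
  have hsum : ∀ j : ℕ, ∑ v ∈ p.coeff.support, AddMonoidAlgebra.single v (p.coeff v) *
      AddMonoidAlgebra.single (r • v) 1 ^ j ∈ Ideal.torsionOf (LaurentRing d) _ θ := by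
    intro j
    rw [Ideal.mem_torsionOf_iff, ← hdil j, dilation_eq_sum]
    simp only [AddMonoidAlgebra.single_pow, AddMonoidAlgebra.single_mul_single, one_pow, mul_one,
      add_smul, one_smul, mul_smul]
  have hmem := mul_prod_sub_mem_of_sum_mul_pow_mem hsum (Finsupp.mem_support_iff.2 h0)
  rw [smul_zero, ← AddMonoidAlgebra.one_def, Ideal.mem_torsionOf_iff, mul_smul] at hmem
  ext u
  have hu := congrFun hmem u
  rw [single_smul_apply, sub_zero] at hu
  exact (smul_eq_zero.1 hu).resolve_left h0

theorem mem_transverseTorsion_of_periodSpace_smul_eq_top {W : Submodule ℚ (Fin d → ℚ)}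
    (hθ : (Set.range θ).Finite) (hp : periodSpace d (p • θ) = ⊤) (h0 : p.coeff 0 ≠ 0)
    (hW : W ≠ ⊤) (hpW : ∀ v ∈ p.coeff.support, v ≠ 0 → intVecQ v ∉ W) :
    θ ∈ transverseTorsion (LatticeFunction d ℤ) W := by
  obtain ⟨w, hw, -, hwW⟩ := exists_mem_and_intVecQ_notMem hp.ge (top_le_iff.not.2 hW)
  rw [mem_differenceSubgroup, Ideal.mem_torsionOf_iff, smul_comm] at hw
  obtain ⟨r, hr, hprod⟩ := exists_prod_difference_smul_eq_zero (finite_range_smul _ hθ) hw h0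
  rw [smul_smul] at hprod
  refine mem_transverseTorsion.2 ⟨_, mul_mem (prod_mem fun v hv => ?_)
    (difference_mem_transverseMonoid hwW), hprod⟩
  obtain ⟨hv0, hvp⟩ := Finset.mem_erase.1 hv
  exact difference_mem_transverseMonoid ((intVecQ_nsmul_mem_iff hr).not.2 (hpW v hvp hv0))

end Dilation

section Splitting

variable {A : Type*} [AddCommGroup A] {X W : Submodule ℚ (Fin d → ℚ)} {θ : LatticeFunction d A}

lemma mem_iSup_mixed_of_prod_difference_smul_eq_zero {ι : Type*} {w : ι → Fin d → ℤ}
    (hXW : X ≤ W) (hwW : ∀ i, intVecQ (w i) ∈ W)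
    (hw : Pairwise fun i j => intVecQ (w i) ∉ ℚ ∙ intVecQ (w j) ⊔ X) (s : Finset ι)
    (hθ : θ ∈ mixed (LatticeFunction d A) X W) (h : (∏ i ∈ s, difference (w i)) • θ = 0) :
    θ ∈ ⨆ i ∈ s, mixed (LatticeFunction d A) (ℚ ∙ intVecQ (w i) ⊔ X) W := by
  classical
  induction s using Finset.induction_on generalizing θ with
  | empty =>
    rw [Finset.prod_empty, one_smul] at h
    exact h ▸ zero_mem _
  | insert i s hi ih =>
    rw [Finset.prod_insert hi, mul_comm, mul_smul] at h
    have hintegrable : ⨆ j ∈ s, mixed (LatticeFunction d A) (ℚ ∙ intVecQ (w j) ⊔ X) W ≤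
        difference (w i) • ⨆ j ∈ s, mixed (LatticeFunction d A) (ℚ ∙ intVecQ (w j) ⊔ X) W :=
      iSup₂_le fun j hj => (mixed_le_difference_smul_mixed
        (sup_le ((span_singleton_le_iff_mem _ _).2 (hwW j)) hXW)
        (hw (ne_of_mem_of_not_mem hj hi).symm)).trans
        (smul_mono_right _ (le_iSup₂_of_le j hj le_rfl))
    obtain ⟨y, hy, hθy, hdy⟩ := exists_mem_sub_mem_and_smul_sub_eq_zero hintegrable
      (iSup₂_le fun _ _ => mixed_anti le_sup_right le_rfl) hθ (ih (smul_mem _ _ hθ) h)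
    rw [Finset.iSup_insert, ← sub_add_cancel θ y]
    exact add_mem (mem_sup_left (mem_mixed_sup_left hθy hdy)) (mem_sup_right hy)

lemma exists_prod_difference_add_nsmul_smul_eq_zero {M : Type*} [AddCommGroup M]
    [Module (LaurentRing d) M] {x : M} {a b : Fin d → ℤ}
    (ha : difference a ∈ (Ideal.torsionOf (LaurentRing d) M x).radical)
    (hb : difference b ∈ (Ideal.torsionOf (LaurentRing d) M x).radical) :
    ∃ n : ℕ, (∏ i ∈ Finset.range n, difference (a + i • b)) • x = 0 := by
  have hrad : Ideal.span {difference a, difference b} ≤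
      (Ideal.torsionOf (LaurentRing d) M x).radical :=
    Ideal.span_le.2 (Set.pair_subset ha hb)
  obtain ⟨n, hn⟩ := Ideal.exists_pow_le_of_le_radical_of_fg hrad
    (fg_span (Set.toFinite _))
  have hmem : ∀ i ∈ Finset.range n,
      difference (a + i • b) ∈ Ideal.span {difference a, difference b} := fun i _ =>
    add_mem (S := AddSubgroup _) (s := differenceSubgroup (Ideal.span {difference a, difference b}))
      (Ideal.mem_span_pair.2 ⟨1, 0, by ring⟩)
      (nsmul_mem (mem_differenceSubgroup.2 (Ideal.mem_span_pair.2 ⟨0, 1, by ring⟩)) i)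
  have hprod := Ideal.prod_mem_prod hmem
  rw [Finset.prod_const, Finset.card_range] at hprod
  exact ⟨n, (Ideal.mem_torsionOf_iff _ _).1 (hn hprod)⟩

lemma mixed_le_iSup_mixed_of_finrank_lt (hXW : X ≤ W) (hfin : finrank ℚ X + 1 < finrank ℚ W) :
    mixed (LatticeFunction d A) X W ≤
      ⨆ X', ⨆ (_ : X ⋖ X' ∧ X' ≤ W), mixed (LatticeFunction d A) X' W := by
  intro θ hθ
  obtain ⟨a, ha, haW, haX⟩ := exists_mem_and_intVecQ_notMem hθ.2 (Y := X)
    fun h => by have := finrank_mono h; lia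
  obtain ⟨b, hb, hbW, hbX⟩ := exists_mem_and_intVecQ_notMem hθ.2 (Y := ℚ ∙ intVecQ a ⊔ X)
    fun h => by
      have := finrank_mono h
      rw [finrank_eq_add_one_of_covBy (covBy_span_singleton_sup haX)] at this
      lia
  have hmul : ∀ i : ℕ, intVecQ (a + i • b) = intVecQ a + i • intVecQ b := fun i => by
    rw [intVecQ_add, intVecQ_nsmul]
  have hmem : ∀ i : ℕ, intVecQ (a + i • b) ∈ W := fun i =>
    hmul i ▸ add_mem haW (nsmul_mem hbW i)
  have hpair : Pairwise fun i j : ℕ => intVecQ (a + i • b) ∉ ℚ ∙ intVecQ (a + j • b) ⊔ X := by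
    simpa only [hmul] using pairwise_add_nsmul_notMem_span_sup haX hbX
  have hX : ∀ i : ℕ, intVecQ (a + i • b) ∉ X := fun i h =>
    hpair (Nat.succ_ne_self i).symm (mem_sup_right h)
  obtain ⟨n, hn⟩ := exists_prod_difference_add_nsmul_smul_eq_zero ha hb
  refine SetLike.le_def.1 (iSup₂_le fun i _ => ?_)
    (mem_iSup_mixed_of_prod_difference_smul_eq_zero hXW hmem hpair _ hθ hn)
  exact le_iSup₂_of_le _ ⟨covBy_span_singleton_sup (hX i),
    sup_le ((span_singleton_le_iff_mem _ _).2 (hmem i)) hXW⟩ le_rfl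

theorem mixed_le_iSup_mixed_finrank_eq {k : ℕ} (hXW : X ≤ W) (hX : finrank ℚ X ≤ k)
    (hW : k < finrank ℚ W) :
    mixed (LatticeFunction d A) X W ≤
      ⨆ Y : {Y : Submodule ℚ (Fin d → ℚ) // finrank ℚ Y = k},
        mixed (LatticeFunction d A) Y.1 Y.1 := by
  induction X using WellFoundedGT.induction with
  | ind X ih =>
  rcases hX.eq_or_lt with hX | hX
  · exact (mixed_anti le_rfl hXW).trans
      (le_iSup_of_le (⟨X, hX⟩ : {Y : Submodule ℚ (Fin d → ℚ) // finrank ℚ Y = k}) le_rfl)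
  · refine (mixed_le_iSup_mixed_of_finrank_lt hXW (by lia)).trans
      (iSup₂_le fun X' ⟨hcov, hX'W⟩ => ih X' hcov.lt hX'W ?_)
    rw [finrank_eq_add_one_of_covBy hcov]
    exact hX

end Splitting

section FinrankDecomposition

variable {A : Type*} [AddCommGroup A] {W W' : Submodule ℚ (Fin d → ℚ)} {k : ℕ}
  {θ : LatticeFunction d A}

lemma mixed_le_transverseTorsion_of_finrank_eq {M : Type*} [AddCommGroup M]
    [Module (LaurentRing d) M] {X : Submodule ℚ (Fin d → ℚ)}
    (h : finrank ℚ W' = finrank ℚ W) (hne : W ≠ W') : mixed M X W' ≤ transverseTorsion M W :=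
  mixed_le_transverseTorsion fun hle => hne (eq_of_le_of_finrank_eq hle h).symm

theorem mem_iSup_mixed_bot_of_forall_mem_transverseTorsion
    (h : ∀ W : Submodule ℚ (Fin d → ℚ), finrank ℚ W < k →
      θ ∈ transverseTorsion (LatticeFunction d A) W) :
    θ ∈ ⨆ W : {W : Submodule ℚ (Fin d → ℚ) // finrank ℚ W = k},
      mixed (LatticeFunction d A) ⊥ W.1 := by
  induction k with
  | zero => exact mem_iSup_of_mem ⟨⊥, finrank_bot ℚ _⟩ ⟨bot_le, bot_le⟩
  | succ k ih =>
    have hsplit := mem_iSup_inf_of_forall_mem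
      (T := fun W : {W : Submodule ℚ (Fin d → ℚ) // finrank ℚ W = k} => transverseTorsion _ W.1)
      (fun W W' hne => mixed_le_transverseTorsion_of_finrank_eq (W'.2.trans W.2.symm)
        (Subtype.coe_ne_coe.2 hne))
      (ih fun W hW => h W (hW.trans k.lt_succ_self)) fun W => h W (W.2.trans_lt k.lt_succ_self)
    refine SetLike.le_def.1 (iSup_le fun W => (mixed_inf_transverseTorsion_le bot_le).trans
      (iSup₂_le fun W' hW' => ?_)) hsplit
    exact le_iSup_of_le (⟨W', by rw [finrank_eq_add_one_of_covBy hW', W.2]⟩ :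
      {W : Submodule ℚ (Fin d → ℚ) // finrank ℚ W = k + 1}) le_rfl

lemma mem_periodicModTransverse_of_mem_iSup_mixed [IsAddTorsionFree A]
    (hθ : (Set.range θ).Finite) (hW : finrank ℚ W = k)
    (hmixed : θ ∈ ⨆ W : {W : Submodule ℚ (Fin d → ℚ) // finrank ℚ W = k},
      mixed (LatticeFunction d A) ⊥ W.1) :
    θ ∈ periodicModTransverse A W := by
  have hunip : θ ∈ (mixed (LatticeFunction d A ⧸ transverseTorsion (LatticeFunction d A) W)
      ⊥ W).comap (mkQ _) := by
    refine SetLike.le_def.1 (iSup_le fun W' => ?_) hmixed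
    rcases eq_or_ne W W' with rfl | hne
    · exact mixed_le_comap_mixed _ _ _
    · exact (mixed_le_transverseTorsion_of_finrank_eq (W'.2.trans hW.symm) hne).trans
        (le_comap_mkQ _ _)
  exact mem_periodicModTransverse.2 (hunip.2.trans (unipotentSpace_mkQ_le_periodSpace_mkQ hθ W))

lemma mixed_bot_inf_periodicModTransverse_le (hW : finrank ℚ W = k) :
    mixed (LatticeFunction d A) ⊥ W ⊓ periodicModTransverse A W ≤
      ⨆ Y : {Y : Submodule ℚ (Fin d → ℚ) // finrank ℚ Y = k},
        mixed (LatticeFunction d A) Y.1 Y.1 := by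
  refine (mixed_inf_periodicModTransverse_le bot_le).trans
    (sup_le (le_iSup_of_le ⟨W, hW⟩ le_rfl) (iSup₂_le fun W' hW' => ?_))
  refine mixed_le_iSup_mixed_finrank_eq bot_le ((finrank_bot ℚ _).trans_le k.zero_le) ?_
  rw [finrank_eq_add_one_of_covBy hW', hW]
  exact k.lt_succ_self

theorem mem_iSup_mixed_self_of_forall_mem_transverseTorsion [IsAddTorsionFree A]
    (hθ : (Set.range θ).Finite)
    (h : ∀ W : Submodule ℚ (Fin d → ℚ), finrank ℚ W < k →
      θ ∈ transverseTorsion (LatticeFunction d A) W) :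
    θ ∈ ⨆ W : {W : Submodule ℚ (Fin d → ℚ) // finrank ℚ W = k},
      mixed (LatticeFunction d A) W.1 W.1 := by
  have hmixed := mem_iSup_mixed_bot_of_forall_mem_transverseTorsion h
  refine SetLike.le_def.1 (iSup_le fun W => mixed_bot_inf_periodicModTransverse_le W.2)
    (mem_iSup_inf_of_forall_mem (fun W W' hne => ?_) hmixed
      fun W => mem_periodicModTransverse_of_mem_iSup_mixed hθ W.2 hmixed)
  exact (mixed_le_transverseTorsion_of_finrank_eq (W'.2.trans W.2.symm)
    (Subtype.coe_ne_coe.2 hne)).trans transverseTorsion_le_periodicModTransverse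

end FinrankDecomposition

section Configurations

variable {k : ℕ} {c : LatticeFunction d ℤ}

theorem kPeriodic_iff_le_finrank_periodSpace :
    KPeriodic k c ↔ k ≤ finrank ℚ (periodSpace d c) := by
  constructor
  · rintro ⟨v, hv, hc⟩
    have hle : span ℚ (Set.range fun i => intVecQ (v i)) ≤ periodSpace d c := by
      refine span_le.2 (Set.range_subset_iff.2 fun i => intVecQ_mem_rationalSpan ?_)
      exact (Ideal.mem_torsionOf_iff _ _).2 (difference_smul_eq_zero_iff.2 (hc i))
    simpa only [finrank_span_eq_card hv, Fintype.card_fin] using finrank_mono hle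
  · intro hk
    obtain ⟨w, hw, -, hlin⟩ := exists_fun_fin_finrank_span_eq ℚ
      (intVecQ '' (differenceSubgroup (Ideal.torsionOf (LaurentRing d) _ c) : Set (Fin d → ℤ)))
    choose v hv hvw using hw
    refine ⟨fun i => v (Fin.castLE hk i), ?_, fun i => difference_smul_eq_zero_iff.1
      ((Ideal.mem_torsionOf_iff _ _).1 (hv (Fin.castLE hk i)))⟩
    simp only [hvw]
    exact hlin.comp _ (Fin.castLE_injective hk)

lemma periodSpace_eq_top_of_stronglyPeriodic (hc : StronglyPeriodic c) : periodSpace d c = ⊤ := by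
  refine eq_top_of_finrank_eq (le_antisymm (finrank_le _) ?_)
  rw [finrank_fin_fun]
  exact kPeriodic_iff_le_finrank_periodSpace.1 hc

lemma exists_laurentRing_of_isPoly {f : (Fin d → ℤ) → ℤ} (hf : IsPoly f) :
    ∃ p : LaurentRing d, ⇑p.coeff = f ∧ ∀ θ : LatticeFunction d ℤ, polyApply f θ = p • θ := by
  refine ⟨.ofCoeff (Finsupp.ofSupportFinite f hf), rfl, fun θ => funext fun u => ?_⟩
  rw [laurent_smul_apply]
  refine finsum_eq_sum_of_support_subset _ fun v hv => Finsupp.mem_support_iff.2 ?_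
  exact left_ne_zero_of_mul hv

lemma exists_eq_sum_kPeriodic_of_mem_iSup_mixed
    (hc : c ∈ ⨆ W : {W : Submodule ℚ (Fin d → ℚ) // finrank ℚ W = k},
      mixed (LatticeFunction d ℤ) W.1 W.1) :
    ∃ (m : ℕ) (cs : Fin m → LatticeFunction d ℤ), (∀ i, KPeriodic k (cs i)) ∧ c = ∑ i, cs i := by
  obtain ⟨φ, hφ, rfl⟩ := (mem_iSup_iff_exists_finsupp _ _).1 hc
  refine ⟨_, fun j => φ (φ.support.equivFin.symm j), fun j => ?_, ?_⟩
  · set W := (φ.support.equivFin.symm j).1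
    exact kPeriodic_iff_le_finrank_periodSpace.2 (W.2.ge.trans (finrank_mono (hφ W).1))
  · rw [φ.support.equivFin.symm.sum_comp fun W => φ W]
    exact (Finset.sum_coe_sort _ _).symm

lemma exists_forall_intVecQ_notMem_of_finrank_lt {ι : Type*} [Fintype ι]
    {S : ι → Set (Fin d → ℤ)}
    (hS : ∀ v : ι → Fin d → ℤ, (∀ i, v i ∈ S i) → LinearIndependent ℚ fun i => intVecQ (v i))
    {W : Submodule ℚ (Fin d → ℚ)} (hW : finrank ℚ W < Fintype.card ι) :
    ∃ i, ∀ v ∈ S i, intVecQ v ∉ W := by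
  contrapose! hW
  choose v hvS hvW using hW
  rw [← finrank_span_eq_card (hS v hvS)]
  exact finrank_mono (span_le.2 (Set.range_subset_iff.2 hvW))

end Configurations

/-- If a configuration `c` has `k` independent periodizers `f₁, …, f_k`
(each with `0` in its support), then `c` is a finite sum of `k`-periodic functions. -/
theorem independent_periodizers_give_k_periodic_decomposition
    {d k : ℕ} (hk1 : 1 ≤ k) (hkd : k ≤ d)
    (c : (Fin d → ℤ) → ℤ) (hconf : (Set.range c).Finite)
    (f : Fin k → ((Fin d → ℤ) → ℤ))
    (hpoly : ∀ i, IsPoly (f i))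
    (hper : ∀ i, StronglyPeriodic (polyApply (f i) c))
    (h0 : ∀ i, (0 : Fin d → ℤ) ∈ Function.support (f i))
    (hind : ∀ v : Fin k → (Fin d → ℤ),
      (∀ i, v i ∈ Function.support (f i) ∧ v i ≠ 0) →
        LinearIndependent ℚ fun i => intVecQ (v i)) :
    ∃ (m : ℕ) (cs : Fin m → ((Fin d → ℤ) → ℤ)),
      (∀ i, KPeriodic k (cs i)) ∧ c = ∑ i, cs i := by
  refine exists_eq_sum_kPeriodic_of_mem_iSup_mixed
    (mem_iSup_mixed_self_of_forall_mem_transverseTorsion hconf fun W hW => ?_)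
  obtain ⟨i, hi⟩ := exists_forall_intVecQ_notMem_of_finrank_lt
    (S := fun i => Function.support (f i) \ {0}) hind (hW.trans_eq (Fintype.card_fin k).symm)
  obtain ⟨p, hpf, hpc⟩ := exists_laurentRing_of_isPoly (hpoly i)
  have hper_i : periodSpace d (p • c) = ⊤ :=
    periodSpace_eq_top_of_stronglyPeriodic (hpc c ▸ hper i)
  have hW_top : W ≠ ⊤ := by
    rintro rfl
    rw [finrank_top, finrank_fin_fun] at hW
    exact hW.not_ge hkd
  refine mem_transverseTorsion_of_periodSpace_smul_eq_top hconf hper_i (hpf ▸ h0 i) hW_top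
    fun v hv hv0 => hi v ⟨?_, hv0⟩
  rw [← hpf]
  exact Finsupp.mem_support_iff.1 hv

end PaperFormal
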